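/- arXiv:2602.13729 — 4 statements merged into one kernel-verified Lean document; each statement's English description precedes it below -/
import Mathlib

section
/- Let Σ, Σ̂ ∈ ℝ^{p×p} be symmetric positive-definite matrices and let O ⊆ {1,…,p} be nonempty. Define P = Σ_{OO}^{-1} Σ_O and P̂ = Σ̂_{OO}^{-1} Σ̂_O, where Σ_O ∈ ℝ^{|O|×p} denotes the rows of Σ indexed by O and Σ_{OO} the principal submatrix with rows and columns indexed by O. Then ‖P̂ − P‖_op ≤ (2 / λ_min(Σ)) · ‖Σ̂ − Σ‖_op · λ_max(Σ̂) / λ_min(Σ̂). -/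
/-!
Write `D = Σ̂ - Σ`. Multiplying by `Σ_OO` removes the inverse of `Σ_OO`:
`Σ_OO (P̂ - P) = D_O - D_OO P̂`. Submatrices act as the full matrix between zero-extended
and restricted vectors, so `λ_min(Σ) ‖w‖ ≤ ‖Σ_OO w‖` (`lamMin_mul_eNorm_le`) and both `D_O` and
`D_OO` have operator norm at most `‖D‖`. This gives
`λ_min(Σ) ‖P̂ - P‖ ≤ ‖D‖ (1 + ‖P̂‖)`.

The same lower bound for `Σ̂_OO`, applied to `Σ̂_OO P̂ = Σ̂_O`, and the bound `‖Σ̂ x‖ ≤ λ_max(Σ̂) ‖x‖`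
(`eNorm_mulVec_le_lamMax`) give `‖P̂‖ ≤ λ_max(Σ̂) / λ_min(Σ̂)`. This ratio is at least `1`, so
`1 + ‖P̂‖` is at most twice the ratio.
-/

open Matrix BigOperators

/-- Euclidean norm of a vector. -/
noncomputable def eNorm {n : Type*} [Fintype n] (v : n → ℝ) : ℝ :=
  Real.sqrt (∑ i, (v i) ^ 2)

/-- Operator norm of a matrix (with respect to Euclidean norms). -/
noncomputable def opNorm {m n : Type*} [Fintype m] [Fintype n] (A : Matrix m n ℝ) : ℝ :=
  sInf {c : ℝ | 0 ≤ c ∧ ∀ x : n → ℝ, eNorm (A.mulVec x) ≤ c * eNorm x}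

/-- Smallest eigenvalue of a symmetric matrix, via the Rayleigh quotient. -/
noncomputable def lamMin {n : Type*} [Fintype n] (A : Matrix n n ℝ) : ℝ :=
  sInf {r : ℝ | ∃ x : n → ℝ, eNorm x = 1 ∧ r = x ⬝ᵥ A.mulVec x}

/-- Largest eigenvalue of a symmetric matrix, via the Rayleigh quotient. -/
noncomputable def lamMax {n : Type*} [Fintype n] (A : Matrix n n ℝ) : ℝ :=
  sSup {r : ℝ | ∃ x : n → ℝ, eNorm x = 1 ∧ r = x ⬝ᵥ A.mulVec x}

/-! ### The Euclidean norm and the operator norm -/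

section Norms

variable {m n : Type*} [Fintype m] [Fintype n]

lemma eNorm_eq_norm (v : n → ℝ) : eNorm v = ‖WithLp.toLp 2 v‖ := by
  simp [eNorm, EuclideanSpace.norm_eq]

lemma eNorm_nonneg (v : n → ℝ) : 0 ≤ eNorm v := Real.sqrt_nonneg _

lemma eNorm_sq (v : n → ℝ) : eNorm v ^ 2 = v ⬝ᵥ v := by
  rw [eNorm, Real.sq_sqrt (Finset.sum_nonneg fun i _ => sq_nonneg _)]
  simp [dotProduct, sq]

lemma eNorm_sub_le (v w : n → ℝ) : eNorm (v - w) ≤ eNorm v + eNorm w := by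
  simp only [eNorm_eq_norm, WithLp.toLp_sub]
  exact norm_sub_le _ _

lemma eNorm_smul (c : ℝ) (v : n → ℝ) : eNorm (c • v) = |c| * eNorm v := by
  simp only [eNorm_eq_norm, WithLp.toLp_smul, norm_smul, Real.norm_eq_abs]

lemma dotProduct_le_eNorm (v w : n → ℝ) : v ⬝ᵥ w ≤ eNorm v * eNorm w :=
  Real.sum_mul_le_sqrt_mul_sqrt _ _ _

lemma eNorm_eq_zero {v : n → ℝ} (h : eNorm v = 0) : v = 0 := by
  have := eNorm_sq v
  rw [h] at this
  exact dotProduct_self_eq_zero.mp (by linarith)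

lemma exists_opNorm_bound (A : Matrix m n ℝ) :
    ∃ c : ℝ, 0 ≤ c ∧ ∀ x : n → ℝ, eNorm (A.mulVec x) ≤ c * eNorm x := by
  classical
  refine ⟨‖(Matrix.toLpLin 2 2 A).toContinuousLinearMap‖, norm_nonneg _, fun x => ?_⟩
  simp only [eNorm_eq_norm]
  simpa using (Matrix.toLpLin 2 2 A).toContinuousLinearMap.le_opNorm (WithLp.toLp 2 x)

lemma opNorm_nonneg (A : Matrix m n ℝ) : 0 ≤ opNorm A :=
  Real.sInf_nonneg fun _ h => h.1

lemma opNorm_le {A : Matrix m n ℝ} {c : ℝ} (hc : 0 ≤ c)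
    (h : ∀ x : n → ℝ, eNorm (A.mulVec x) ≤ c * eNorm x) : opNorm A ≤ c :=
  csInf_le ⟨0, fun _ h => h.1⟩ ⟨hc, h⟩

lemma eNorm_mulVec_le (A : Matrix m n ℝ) (x : n → ℝ) :
    eNorm (A.mulVec x) ≤ opNorm A * eNorm x := by
  rcases (eNorm_nonneg x).eq_or_lt with h | h
  · obtain ⟨c, -, hc⟩ := exists_opNorm_bound A
    simpa [← h] using hc x
  · rw [← div_le_iff₀ h]
    exact le_csInf (exists_opNorm_bound A) fun c hc => (div_le_iff₀ h).2 (hc.2 x)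

end Norms

/-! ### Extremal eigenvalues through the Rayleigh quotient -/

section Rayleigh

variable {n : Type*} [Fintype n]

lemma continuous_eNorm : Continuous (eNorm : (n → ℝ) → ℝ) := by
  unfold eNorm
  fun_prop

lemma isCompact_eNorm_sphere : IsCompact {x : n → ℝ | eNorm x = 1} := by
  refine Metric.isCompact_of_isClosed_isBounded (isClosed_eq continuous_eNorm continuous_const) ?_
  refine (Metric.isBounded_closedBall (x := (0 : n → ℝ)) (r := 1)).subset fun x hx => ?_
  rw [mem_closedBall_zero_iff, pi_norm_le_iff_of_nonneg zero_le_one]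
  intro i
  have h1 : ‖WithLp.toLp 2 x i‖ ≤ ‖WithLp.toLp 2 x‖ := PiLp.norm_apply_le _ i
  rw [← eNorm_eq_norm, Set.mem_ofPred_eq.mp hx] at h1
  exact h1

lemma isCompact_rayleigh (A : Matrix n n ℝ) :
    IsCompact {r : ℝ | ∃ x : n → ℝ, eNorm x = 1 ∧ r = x ⬝ᵥ A.mulVec x} := by
  have hc : Continuous fun x : n → ℝ => x ⬝ᵥ A.mulVec x := by fun_prop
  convert isCompact_eNorm_sphere.image hc using 1
  ext r
  simp [eq_comm]

lemma rayleigh_nonempty [Nonempty n] (A : Matrix n n ℝ) :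
    {r : ℝ | ∃ x : n → ℝ, eNorm x = 1 ∧ r = x ⬝ᵥ A.mulVec x}.Nonempty := by
  classical
  obtain ⟨i⟩ := ‹Nonempty n›
  refine ⟨_, Pi.single i 1, ?_, rfl⟩
  simp [eNorm, Pi.single_apply]

lemma normalized_rayleigh (A : Matrix n n ℝ) {x : n → ℝ} (hx : 0 < eNorm x) :
    (x ⬝ᵥ A.mulVec x) / eNorm x ^ 2 ∈
      {r : ℝ | ∃ x : n → ℝ, eNorm x = 1 ∧ r = x ⬝ᵥ A.mulVec x} := by
  refine ⟨(eNorm x)⁻¹ • x, ?_, ?_⟩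
  · rw [eNorm_smul, abs_of_pos (inv_pos.2 hx), inv_mul_cancel₀ hx.ne']
  · simp only [mulVec_smul, smul_dotProduct, dotProduct_smul, smul_eq_mul]
    field_simp

lemma lamMin_mul_sq_le (A : Matrix n n ℝ) (x : n → ℝ) :
    lamMin A * eNorm x ^ 2 ≤ x ⬝ᵥ A.mulVec x := by
  rcases (eNorm_nonneg x).eq_or_lt with h | h
  · simp [eNorm_eq_zero h.symm, eNorm]
  · rw [← le_div_iff₀ (by positivity)]
    exact csInf_le (isCompact_rayleigh A).bddBelow (normalized_rayleigh A h)

lemma le_lamMax_mul_sq (A : Matrix n n ℝ) (x : n → ℝ) :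
    x ⬝ᵥ A.mulVec x ≤ lamMax A * eNorm x ^ 2 := by
  rcases (eNorm_nonneg x).eq_or_lt with h | h
  · simp [eNorm_eq_zero h.symm, eNorm]
  · rw [← div_le_iff₀ (by positivity)]
    exact le_csSup (isCompact_rayleigh A).bddAbove (normalized_rayleigh A h)

lemma lamMin_le_lamMax [Nonempty n] (A : Matrix n n ℝ) : lamMin A ≤ lamMax A :=
  csInf_le_csSup (rayleigh_nonempty A) (isCompact_rayleigh A).bddBelow
    (isCompact_rayleigh A).bddAbove

/-- The infimum defining `lamMin` is attained on the compact unit sphere, hence positive. -/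
lemma lamMin_pos [Nonempty n] {A : Matrix n n ℝ} (hA : A.PosDef) : 0 < lamMin A := by
  obtain ⟨x, hx, h⟩ := (isCompact_rayleigh A).sInf_mem (rayleigh_nonempty A)
  rw [lamMin, h]
  have hx0 : x ≠ 0 := by
    rintro rfl
    simp [eNorm] at hx
  simpa using hA.dotProduct_mulVec_pos hx0

/-- With `y = A x` and `L = lamMax A`, nonnegativity of the quadratic form of `A` at `y - L x`
gives `L ‖y‖² ≤ L³ ‖x‖²`. -/
lemma eNorm_mulVec_le_lamMax [Nonempty n] {A : Matrix n n ℝ} (hA : A.PosDef) (x : n → ℝ) :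
    eNorm (A.mulVec x) ≤ lamMax A * eNorm x := by
  have hL : 0 < lamMax A := (lamMin_pos hA).trans_le (lamMin_le_lamMax A)
  set L := lamMax A with hLdef
  set y := A.mulVec x with hy
  have h0 : 0 ≤ (y - L • x) ⬝ᵥ A.mulVec (y - L • x) := by
    simpa using hA.posSemidef.dotProduct_mulVec_nonneg (y - L • x)
  have hsymm : x ⬝ᵥ A.mulVec y = y ⬝ᵥ y := by
    have hT : Aᵀ = A := by
      rw [← conjTranspose_eq_transpose_of_trivial]
      exact hA.isHermitian.eq
    rw [dotProduct_mulVec, ← mulVec_transpose, hT]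
  have hexp : (y - L • x) ⬝ᵥ A.mulVec (y - L • x)
      = y ⬝ᵥ A.mulVec y - 2 * L * eNorm y ^ 2 + L ^ 2 * (x ⬝ᵥ A.mulVec x) := by
    simp only [mulVec_sub, mulVec_smul, sub_dotProduct, dotProduct_sub, smul_dotProduct,
      dotProduct_smul, smul_eq_mul, hsymm, ← hy, eNorm_sq]
    ring
  have h1 := le_lamMax_mul_sq A y
  have h2 := mul_le_mul_of_nonneg_left (le_lamMax_mul_sq A x) (sq_nonneg L)
  rw [← hLdef] at h1 h2
  have h3 : L * eNorm y ^ 2 ≤ L * (L * eNorm x) ^ 2 := by nlinarith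
  exact le_of_sq_le_sq (le_of_mul_le_mul_left h3 hL)
    (mul_nonneg hL.le (eNorm_nonneg x))

end Rayleigh

/-! ### Restriction to an index set and extension by zero -/

section Restriction

variable {n : Type*} {O : Finset n}

lemma eNorm_restrict_le [Fintype n] (x : n → ℝ) : eNorm (fun j : ↥O => x j) ≤ eNorm x := by
  apply Real.sqrt_le_sqrt
  rw [Finset.sum_coe_sort O fun i => x i ^ 2]
  exact Finset.sum_le_sum_of_subset_of_nonneg (Finset.subset_univ _) fun i _ _ => sq_nonneg _

lemma eNorm_rows_mulVec_le [Fintype n] (A : Matrix n n ℝ) (x : n → ℝ) :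
    eNorm ((A.submatrix (Subtype.val : ↥O → n) id).mulVec x) ≤ eNorm (A.mulVec x) :=
  eNorm_restrict_le (A.mulVec x)

variable [DecidableEq n]

/-- Extension by zero of a vector indexed by `O` to the full index set. -/
def zeroExt (v : ↥O → ℝ) : n → ℝ := fun i => if h : i ∈ O then v ⟨i, h⟩ else 0

lemma zeroExt_apply (v : ↥O → ℝ) (j : ↥O) : zeroExt v j = v j := by simp [zeroExt]

variable [Fintype n]

lemma sum_mul_zeroExt (f : n → ℝ) (v : ↥O → ℝ) :
    ∑ i, f i * zeroExt v i = ∑ j : ↥O, f j * v j := by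
  rw [← Finset.sum_subset (Finset.subset_univ O), ← Finset.sum_coe_sort O]
  · exact Finset.sum_congr rfl fun j _ => by simp [zeroExt]
  · intro i _ hi
    simp [zeroExt, hi]

lemma eNorm_zeroExt (v : ↥O → ℝ) : eNorm (zeroExt v) = eNorm v := by
  have h := sum_mul_zeroExt (zeroExt v) v
  simp only [zeroExt_apply] at h
  simp only [eNorm, sq, h]

lemma submatrix_mulVec_eq (A : Matrix n n ℝ) (v : ↥O → ℝ) :
    (A.submatrix (Subtype.val : ↥O → n) Subtype.val).mulVec v
      = fun j : ↥O => A.mulVec (zeroExt v) j := by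
  funext j
  exact (sum_mul_zeroExt (fun i => A j i) v).symm

lemma eNorm_submatrix_mulVec_le (A : Matrix n n ℝ) (v : ↥O → ℝ) :
    eNorm ((A.submatrix (Subtype.val : ↥O → n) Subtype.val).mulVec v) ≤ opNorm A * eNorm v := by
  rw [submatrix_mulVec_eq, ← eNorm_zeroExt v]
  exact (eNorm_restrict_le _).trans (eNorm_mulVec_le A _)

/-- The Rayleigh quotient of `A_OO` at `v` is that of `A` at the zero extension of `v`, so
`λ_min(A) ‖v‖² ≤ v ⬝ A_OO v ≤ ‖v‖ ‖A_OO v‖`. -/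
lemma lamMin_mul_eNorm_le (A : Matrix n n ℝ) (v : ↥O → ℝ) :
    lamMin A * eNorm v
      ≤ eNorm ((A.submatrix (Subtype.val : ↥O → n) Subtype.val).mulVec v) := by
  rcases (eNorm_nonneg v).eq_or_lt with h | h
  · rw [← h, mul_zero]
    exact eNorm_nonneg _
  have h1 := lamMin_mul_sq_le A (zeroExt v)
  have h2 : zeroExt v ⬝ᵥ A.mulVec (zeroExt v)
      = (A.submatrix (Subtype.val : ↥O → n) Subtype.val).mulVec v ⬝ᵥ v := by
    rw [dotProduct_comm, submatrix_mulVec_eq]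
    exact sum_mul_zeroExt _ v
  have h3 := dotProduct_le_eNorm
    ((A.submatrix (Subtype.val : ↥O → n) Subtype.val).mulVec v) v
  rw [h2, eNorm_zeroExt] at h1
  refine le_of_mul_le_mul_right ?_ h
  nlinarith

end Restriction

theorem stmt2 (p : ℕ) (Sig SigHat : Matrix (Fin p) (Fin p) ℝ)
    (hSig : Sig.PosDef) (hSigHat : SigHat.PosDef)
    (O : Finset (Fin p)) (hO : O.Nonempty) :
    -- `P = Σ_{OO}⁻¹ Σ_O` and `P̂ = Σ̂_{OO}⁻¹ Σ̂_O`
    opNorm ((SigHat.submatrix (Subtype.val : ↥O → Fin p) Subtype.val)⁻¹ *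
              SigHat.submatrix (Subtype.val : ↥O → Fin p) id -
            (Sig.submatrix (Subtype.val : ↥O → Fin p) Subtype.val)⁻¹ *
              Sig.submatrix (Subtype.val : ↥O → Fin p) id)
      ≤ (2 / lamMin Sig) * opNorm (SigHat - Sig) * lamMax SigHat / lamMin SigHat := by
  have : Nonempty (Fin p) := ⟨hO.choose⟩
  set S := Sig.submatrix (Subtype.val : ↥O → Fin p) Subtype.val with hS
  set T := SigHat.submatrix (Subtype.val : ↥O → Fin p) Subtype.val with hT
  set SO := Sig.submatrix (Subtype.val : ↥O → Fin p) id with hSO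
  set TO := SigHat.submatrix (Subtype.val : ↥O → Fin p) id with hTO
  have hSu : IsUnit S.det :=
    (Matrix.isUnit_iff_isUnit_det _).1 (hSig.submatrix Subtype.val_injective).isUnit
  have hTu : IsUnit T.det :=
    (Matrix.isUnit_iff_isUnit_det _).1 (hSigHat.submatrix Subtype.val_injective).isUnit
  have hl := lamMin_pos hSig
  have hm := lamMin_pos hSigHat
  have hmL := lamMin_le_lamMax SigHat
  have hd := opNorm_nonneg (SigHat - Sig)
  have hL : 0 < lamMax SigHat := hm.trans_le hmL
  refine opNorm_le (by positivity) fun x => ?_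
  have hx := eNorm_nonneg x
  set w := (T⁻¹ * TO - S⁻¹ * SO).mulVec x with hw
  set q := (T⁻¹ * TO).mulVec x with hq
  have hTq : T.mulVec q = TO.mulVec x := by
    rw [hq, mulVec_mulVec, ← Matrix.mul_assoc, Matrix.mul_nonsing_inv _ hTu, Matrix.one_mul]
  have hSw : S.mulVec w = ((SigHat - Sig).submatrix (Subtype.val : ↥O → Fin p) id).mulVec x
      - ((SigHat - Sig).submatrix (Subtype.val : ↥O → Fin p) Subtype.val).mulVec q := by
    have e1 : (SigHat - Sig).submatrix (Subtype.val : ↥O → Fin p) id = TO - SO := rfl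
    have e2 : (SigHat - Sig).submatrix (Subtype.val : ↥O → Fin p) Subtype.val = T - S := rfl
    rw [e1, e2, sub_mulVec, sub_mulVec, hTq, hw, sub_mulVec, mulVec_sub, ← hq,
      mulVec_mulVec (M := S) (N := S⁻¹ * SO), ← Matrix.mul_assoc, Matrix.mul_nonsing_inv _ hSu,
      Matrix.one_mul]
    abel
  have hqb : lamMin SigHat * eNorm q ≤ lamMax SigHat * eNorm x := by
    have h := lamMin_mul_eNorm_le SigHat q
    rw [← hT, hTq] at h
    exact h.trans ((eNorm_rows_mulVec_le SigHat x).trans (eNorm_mulVec_le_lamMax hSigHat x))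
  have hwb : lamMin Sig * eNorm w ≤ opNorm (SigHat - Sig) * (eNorm x + eNorm q) := by
    have h := lamMin_mul_eNorm_le Sig w
    rw [← hS, hSw] at h
    have h1 := (eNorm_rows_mulVec_le (O := O) (SigHat - Sig) x).trans (eNorm_mulVec_le _ x)
    have h2 := eNorm_submatrix_mulVec_le (SigHat - Sig) q
    linarith [h.trans (eNorm_sub_le _ _)]
  -- `λ_min(Σ̂) ≤ λ_max(Σ̂)` absorbs the summand `‖x‖` into the bound for `q = P̂ x`.
  have hsum : lamMin SigHat * (eNorm x + eNorm q) ≤ 2 * lamMax SigHat * eNorm x := by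
    nlinarith
  have hfin : lamMin Sig * lamMin SigHat * eNorm w
      ≤ opNorm (SigHat - Sig) * (2 * lamMax SigHat * eNorm x) := by
    have h1 := mul_le_mul_of_nonneg_left hwb hm.le
    have h2 := mul_le_mul_of_nonneg_left hsum hd
    linarith
  have hrw : 2 / lamMin Sig * opNorm (SigHat - Sig) * lamMax SigHat / lamMin SigHat * eNorm x
      = opNorm (SigHat - Sig) * (2 * lamMax SigHat * eNorm x)
        / (lamMin Sig * lamMin SigHat) := by
    field_simp
  rw [hrw, le_div_iff₀ (by positivity)]
  rw [mul_comm]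
  exact hfin
end

section
/- Let p ≥ 1 and 1 ≤ s ≤ p be integers, let Φ_Σ > 0 and λ > 0. Let Σ, Σ̂ ∈ ℝ^{p×p}, γ̂ ∈ ℝ^p and β* ∈ ℝ^p with ‖β*‖₀ ≤ s. Assume ‖γ̂ − Σβ*‖_∞ ≤ λ/2, ‖Σ̂β* − Σβ*‖_∞ ≤ λ/2, and that Σ̂ satisfies Re(s, Φ_Σ/2). Let β̂ be any minimizer of ‖β‖₁ over the set {β ∈ ℝ^p : ‖Σ̂β − γ̂‖_∞ ≤ λ}. Then ‖β̂ − β*‖₁ ≤ 16 s λ / Φ_Σ. -/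
/-!
The classical Dantzig-selector argument. The vector `β*` is itself feasible, so minimality gives
`‖β̂‖₁ ≤ ‖β*‖₁`; hence `δ = β̂ - β*` lies in the cone `‖δ_{Sᶜ}‖₁ ≤ ‖δ_S‖₁` for `S = supp β*`
(`l1_cone`). Feasibility of both vectors gives `‖Σ̂δ‖_∞ ≤ 2λ`, hence `δᵀΣ̂δ ≤ 2λ‖δ‖₁` by Hölder.
By the cone condition and Cauchy–Schwarz, `‖δ‖₁² ≤ 4‖δ_S‖₁² ≤ 4s‖δ_M‖₂²`, where only `S ⊆ M(δ)`
matters. The restricted eigenvalue bound (`Re_quadratic`) turns this into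
`‖δ‖₁² ≤ 4s · (2/Φ_Σ) · 2λ‖δ‖₁`, and dividing by `‖δ‖₁` gives the claim.
-/

open Matrix BigOperators

/-- ℓ¹ norm. -/
noncomputable def l1 {p : ℕ} (v : Fin p → ℝ) : ℝ := ∑ i, |v i|

/-- ℓ^∞ norm. -/
noncomputable def linf {p : ℕ} (v : Fin p → ℝ) : ℝ := ⨆ i, |v i|

/-- ℓ⁰ "norm": number of nonzero entries. -/
noncomputable def l0 {p : ℕ} (v : Fin p → ℝ) : ℕ :=
  (Finset.univ.filter (fun i => v i ≠ 0)).card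

/-- Restriction of a vector to a set of coordinates (zero outside the set). -/
def restrict {p : ℕ} (T : Finset (Fin p)) (δ : Fin p → ℝ) : Fin p → ℝ :=
  fun i => if i ∈ T then δ i else 0

/-- The `k`-th largest value among `{|δ i| : i ∈ T}` (counted with multiplicity),
characterised as the supremum of thresholds `t` for which at least `k` entries of `|δ|`
on `T` are `≥ t`. -/
noncomputable def kthLargest {p : ℕ} (T : Finset (Fin p)) (δ : Fin p → ℝ) (k : ℕ) : ℝ :=
  sSup {t : ℝ | k ≤ (T.filter (fun i => t ≤ |δ i|)).card}

/-- The set `M(δ) = S ∪ {i ∈ Sᶜ : |δ i| ≥ |δ_{Sᶜ}|_(min{s,|Sᶜ|})}`. -/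
noncomputable def Mset {p : ℕ} (S : Finset (Fin p)) (s : ℕ) (δ : Fin p → ℝ) : Finset (Fin p) :=
  S ∪ (Sᶜ.filter (fun i => kthLargest Sᶜ δ (min s Sᶜ.card) ≤ |δ i|))

/-- The restricted eigenvalue quantity `φ²(A, s)`. -/
noncomputable def phiSq {p : ℕ} (A : Matrix (Fin p) (Fin p) ℝ) (s : ℕ) : ℝ :=
  sInf {r : ℝ | ∃ (S : Finset (Fin p)) (δ : Fin p → ℝ),
    S.card ≤ s ∧ δ ≠ 0 ∧ l1 (restrict Sᶜ δ) ≤ l1 (restrict S δ) ∧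
    r = (δ ⬝ᵥ A.mulVec δ) / (eNorm (restrict (Mset S s δ) δ)) ^ 2}

/-- The restricted eigenvalue condition `Re(s, Φ)`. -/
def Re {p : ℕ} (A : Matrix (Fin p) (Fin p) ℝ) (s : ℕ) (Φ : ℝ) : Prop :=
  Φ ≤ phiSq A s

lemma abs_le_linf {p : ℕ} (v : Fin p → ℝ) (i : Fin p) : |v i| ≤ linf v :=
  le_ciSup (f := fun i => |v i|) (Set.finite_range _).bddAbove i

lemma l1_restrict {p : ℕ} (T : Finset (Fin p)) (δ : Fin p → ℝ) :
    l1 (restrict T δ) = ∑ i ∈ T, |δ i| := by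
  simp [l1, restrict, apply_ite abs, Finset.sum_ite_mem]

lemma eNorm_restrict_sq {p : ℕ} (T : Finset (Fin p)) (δ : Fin p → ℝ) :
    eNorm (restrict T δ) ^ 2 = ∑ i ∈ T, δ i ^ 2 := by
  rw [eNorm, Real.sq_sqrt (Finset.sum_nonneg fun i _ => sq_nonneg _)]
  simp [restrict, ite_pow, Finset.sum_ite_mem]

lemma dotProduct_le_mul_l1 {p : ℕ} (u v : Fin p → ℝ) (c : ℝ) (h : ∀ i, |v i| ≤ c) :
    u ⬝ᵥ v ≤ c * l1 u := by
  rw [l1, Finset.mul_sum, dotProduct]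
  refine Finset.sum_le_sum fun i _ => ?_
  calc u i * v i ≤ |u i * v i| := le_abs_self _
    _ = |v i| * |u i| := by rw [abs_mul, mul_comm]
    _ ≤ c * |u i| := by gcongr; exact h i

/-- A perturbation of `b` that does not increase the `ℓ¹` norm puts at most as much mass off a
set containing the support of `b` as on it. -/
lemma l1_cone {p : ℕ} (S : Finset (Fin p)) (a b : Fin p → ℝ) (hb : ∀ i ∉ S, b i = 0)
    (h : l1 a ≤ l1 b) :
    l1 (restrict Sᶜ (a - b)) ≤ l1 (restrict S (a - b)) := by
  rw [l1_restrict, l1_restrict]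
  rw [l1, l1, ← Finset.sum_add_sum_compl S, ← Finset.sum_add_sum_compl S (fun i => |b i|)] at h
  have hb0 : ∑ i ∈ Sᶜ, |b i| = 0 :=
    Finset.sum_eq_zero fun i hi => by simp [hb i (Finset.mem_compl.mp hi)]
  have hoff : ∑ i ∈ Sᶜ, |(a - b) i| = ∑ i ∈ Sᶜ, |a i| :=
    Finset.sum_congr rfl fun i hi => by simp [hb i (Finset.mem_compl.mp hi)]
  have hon : ∑ i ∈ S, |b i| ≤ ∑ i ∈ S, |a i| + ∑ i ∈ S, |(a - b) i| := by
    rw [← Finset.sum_add_distrib]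
    refine Finset.sum_le_sum fun i _ => ?_
    calc |b i| = |a i - (a - b) i| := by simp
      _ ≤ |a i| + |(a - b) i| := abs_sub _ _
  linarith

/-- For a vector in the cone, `‖δ‖₁² ≤ 4 s ‖δ_M‖₂²`. -/
lemma l1_sq_le {p : ℕ} (S : Finset (Fin p)) (s : ℕ) (δ : Fin p → ℝ) (hS : S.card ≤ s)
    (hcone : l1 (restrict Sᶜ δ) ≤ l1 (restrict S δ)) :
    l1 δ ^ 2 ≤ 4 * s * eNorm (restrict (Mset S s δ) δ) ^ 2 := by
  rw [l1_restrict, l1_restrict] at hcone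
  rw [eNorm_restrict_sq]
  have hsplit : l1 δ ≤ 2 * ∑ i ∈ S, |δ i| := by
    rw [l1, ← Finset.sum_add_sum_compl S]; linarith
  have hcs : (∑ i ∈ S, |δ i|) ^ 2 ≤ S.card * ∑ i ∈ S, δ i ^ 2 := by
    simpa [sq_abs] using sq_sum_le_card_mul_sum_sq (s := S) (f := fun i => |δ i|)
  have hsub : ∑ i ∈ S, δ i ^ 2 ≤ ∑ i ∈ Mset S s δ, δ i ^ 2 :=
    Finset.sum_le_sum_of_subset_of_nonneg Finset.subset_union_left
      fun i _ _ => sq_nonneg _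
  have h0 : 0 ≤ l1 δ := Finset.sum_nonneg fun i _ => abs_nonneg _
  have hS' : (S.card : ℝ) ≤ s := by exact_mod_cast hS
  calc l1 δ ^ 2 ≤ (2 * ∑ i ∈ S, |δ i|) ^ 2 := by gcongr
    _ = 4 * (∑ i ∈ S, |δ i|) ^ 2 := by ring
    _ ≤ 4 * (S.card * ∑ i ∈ S, δ i ^ 2) := by gcongr
    _ ≤ 4 * (s * ∑ i ∈ Mset S s δ, δ i ^ 2) := by gcongr
    _ = _ := by ring

/-- The restricted eigenvalue condition with a positive constant, in multiplied-out form. -/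
lemma Re_quadratic {p : ℕ} (A : Matrix (Fin p) (Fin p) ℝ) (s : ℕ) (Φ : ℝ) (hΦ : 0 < Φ)
    (hRe : Re A s Φ) (S : Finset (Fin p)) (δ : Fin p → ℝ) (hS : S.card ≤ s) (hδ : δ ≠ 0)
    (hcone : l1 (restrict Sᶜ δ) ≤ l1 (restrict S δ)) :
    Φ * eNorm (restrict (Mset S s δ) δ) ^ 2 ≤ δ ⬝ᵥ A.mulVec δ := by
  unfold Re phiSq at hRe
  -- `sInf` of a set unbounded below is `0`, which `0 < Φ ≤ sInf` excludes.
  have hle := hRe.trans (csInf_le (by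
    by_contra hb
    rw [Real.sInf_of_not_bddBelow hb] at hRe
    linarith) ⟨S, δ, hS, hδ, hcone, rfl⟩)
  have hpos : 0 < eNorm (restrict (Mset S s δ) δ) ^ 2 := by
    refine (sq_nonneg _).lt_of_ne fun h0 => ?_
    -- A zero denominator makes the junk quotient `0`, contradicting `0 < Φ`.
    rw [← h0, div_zero] at hle
    linarith
  exact (le_div_iff₀ hpos).mp hle

theorem stmt4 (p s : ℕ) (hp : 1 ≤ p) (hs1 : 1 ≤ s) (hsp : s ≤ p)
    (PhiSig lam : ℝ) (hPhi : 0 < PhiSig) (hlam : 0 < lam)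
    (Sig SigHat : Matrix (Fin p) (Fin p) ℝ) (gamHat betaStar : Fin p → ℝ)
    (hsparse : l0 betaStar ≤ s)
    (h1 : linf (gamHat - Sig.mulVec betaStar) ≤ lam / 2)
    (h2 : linf (SigHat.mulVec betaStar - Sig.mulVec betaStar) ≤ lam / 2)
    (hRe : Re SigHat s (PhiSig / 2))
    (betaHat : Fin p → ℝ)
    (hfeas : linf (SigHat.mulVec betaHat - gamHat) ≤ lam)
    (hmin : ∀ β : Fin p → ℝ, linf (SigHat.mulVec β - gamHat) ≤ lam → l1 betaHat ≤ l1 β) :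
    l1 (betaHat - betaStar) ≤ 16 * s * lam / PhiSig := by
  have hstar : linf (SigHat.mulVec betaStar - gamHat) ≤ lam := by
    have : Nonempty (Fin p) := ⟨⟨0, hp⟩⟩
    refine ciSup_le fun i => ?_
    have ha := abs_le.mp ((abs_le_linf _ i).trans h1)
    have hb := abs_le.mp ((abs_le_linf _ i).trans h2)
    simp only [Pi.sub_apply] at ha hb ⊢
    rw [abs_le]
    constructor <;> linarith
  set δ := betaHat - betaStar with hδdef
  have h0 : 0 ≤ l1 δ := Finset.sum_nonneg fun i _ => abs_nonneg _
  by_cases hδ : δ = 0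
  · have : l1 δ = 0 := by simp [hδ, l1]
    rw [this]
    positivity
  set S : Finset (Fin p) := Finset.univ.filter (fun i => betaStar i ≠ 0) with hSdef
  have hcone : l1 (restrict Sᶜ δ) ≤ l1 (restrict S δ) :=
    l1_cone S betaHat betaStar (fun i hi => by simpa [hSdef] using hi) (hmin _ hstar)
  have hquad : δ ⬝ᵥ SigHat.mulVec δ ≤ 2 * lam * l1 δ := by
    refine dotProduct_le_mul_l1 _ _ _ fun i => ?_
    have ha := abs_le.mp ((abs_le_linf _ i).trans hfeas)
    have hb := abs_le.mp ((abs_le_linf _ i).trans hstar)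
    rw [hδdef, Matrix.mulVec_sub]
    simp only [Pi.sub_apply] at ha hb ⊢
    rw [abs_le]
    constructor <;> linarith
  have hre := Re_quadratic SigHat s _ (half_pos hPhi) hRe S δ hsparse hδ hcone
  have hsq := l1_sq_le S s δ hsparse hcone
  rw [le_div_iff₀ hPhi]
  rcases h0.eq_or_lt with hz | hpos
  · rw [← hz, zero_mul]
    positivity
  refine le_of_mul_le_mul_right ?_ hpos
  calc l1 δ * PhiSig * l1 δ = PhiSig * l1 δ ^ 2 := by ring
    _ ≤ PhiSig * (4 * s * eNorm (restrict (Mset S s δ) δ) ^ 2) := by gcongr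
    _ = 8 * s * (PhiSig / 2 * eNorm (restrict (Mset S s δ) δ) ^ 2) := by ring
    _ ≤ 8 * s * (2 * lam * l1 δ) :=
        mul_le_mul_of_nonneg_left (hre.trans hquad) (by positivity)
    _ = 16 * s * lam * l1 δ := by ring
end

section
/- Let p ≥ 1 and 1 ≤ s ≤ p be integers, let S ⊆ {1,…,p} with |S| ≤ s, and let δ ∈ ℝ^p satisfy ‖δ_{S^c}‖₁ ≤ ‖δ_S‖₁. Let M(δ) = S ∪ {i ∈ S^c : |δ_i| ≥ |δ_{S^c}|_{(min{s,|S^c|})}}. Then ‖δ_{M(δ)^c}‖₂ ≤ ‖δ_{S^c}‖₁ / √s ≤ ‖δ_{M(δ)}‖₂, and consequently ‖δ‖₂ ≤ 2 ‖δ_{M(δ)}‖₂. -/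
/-!
Write `L = ‖δ_{Sᶜ}‖₁` and `M = M(δ)`. An entry outside `M` is smaller than at least `s` entries
of `Sᶜ`, so `s |δ i| ≤ L` (`mul_abs_le_of_notMem_Mset`); hence
`s ∑_{Mᶜ} δ i ^ 2 ≤ L ∑_{Mᶜ} |δ i| ≤ L ^ 2`, which is the first inequality. The second is the cone
condition followed by Cauchy–Schwarz on `S ⊆ M`, where `|S| ≤ s`. Together they give
`‖δ‖₂ ^ 2 = ‖δ_M‖₂ ^ 2 + ‖δ_{Mᶜ}‖₂ ^ 2 ≤ 2 ‖δ_M‖₂ ^ 2`, and `2 ≤ 2 ^ 2`.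
-/

open Matrix BigOperators

lemma eNorm_restrict {p : ℕ} (T : Finset (Fin p)) (δ : Fin p → ℝ) :
    eNorm (restrict T δ) = Real.sqrt (∑ i ∈ T, δ i ^ 2) := by
  simp [eNorm, restrict, ite_pow, Finset.sum_ite_mem]

/-- Every entry outside `M(δ)` is strictly dominated by at least `s` entries of `Sᶜ`, hence is at
most `1 / s` times the ℓ¹ norm of `δ` on `Sᶜ`. -/
lemma mul_abs_le_of_notMem_Mset {p : ℕ} (S : Finset (Fin p)) (s : ℕ) (δ : Fin p → ℝ)
    {i : Fin p} (hi : i ∉ Mset S s δ) :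
    (s : ℝ) * |δ i| ≤ ∑ j ∈ Sᶜ, |δ j| := by
  simp only [Mset, Finset.mem_union, Finset.mem_filter, Finset.mem_compl, not_or, not_and,
    not_le] at hi
  have hlt := hi.2 hi.1
  unfold kthLargest at hlt
  -- `sSup ∅ = 0` cannot exceed `|δ i|`, so some threshold is admissible.
  have hne : {t : ℝ | min s Sᶜ.card ≤ (Sᶜ.filter (fun i => t ≤ |δ i|)).card}.Nonempty := by
    by_contra h
    rw [Set.not_nonempty_iff_eq_empty.mp h, Real.sSup_empty] at hlt
    exact absurd hlt (abs_nonneg _).not_gt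
  obtain ⟨t, ht, hit⟩ := exists_lt_of_lt_csSup hne hlt
  rw [Set.mem_ofPred_eq] at ht
  -- The index `i` itself misses the threshold, which rules out `min s |Sᶜ| = |Sᶜ|`.
  have hcard : (Sᶜ.filter (fun i => t ≤ |δ i|)).card < Sᶜ.card := by
    apply Finset.card_lt_card
    rw [Finset.filter_ssubset]
    exact ⟨i, Finset.mem_compl.mpr hi.1, hit.not_ge⟩
  have hs : s ≤ (Sᶜ.filter (fun i => t ≤ |δ i|)).card := by omega
  calc (s : ℝ) * |δ i| ≤ (Sᶜ.filter (fun i => t ≤ |δ i|)).card * |δ i| := by gcongr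
    _ = ∑ j ∈ Sᶜ.filter (fun i => t ≤ |δ i|), |δ i| := by simp
    _ ≤ ∑ j ∈ Sᶜ.filter (fun i => t ≤ |δ i|), |δ j| :=
        Finset.sum_le_sum fun j hj => hit.le.trans (Finset.mem_filter.mp hj).2
    _ ≤ ∑ j ∈ Sᶜ, |δ j| :=
        Finset.sum_le_sum_of_subset_of_nonneg (Finset.filter_subset _ _)
          fun _ _ _ => abs_nonneg _

theorem stmt5 (p s : ℕ) (hp : 1 ≤ p) (hs1 : 1 ≤ s) (hsp : s ≤ p)
    (S : Finset (Fin p)) (hS : S.card ≤ s)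
    (δ : Fin p → ℝ) (hcone : l1 (restrict Sᶜ δ) ≤ l1 (restrict S δ)) :
    eNorm (restrict (Mset S s δ)ᶜ δ) ≤ l1 (restrict Sᶜ δ) / Real.sqrt s ∧
    l1 (restrict Sᶜ δ) / Real.sqrt s ≤ eNorm (restrict (Mset S s δ) δ) ∧
    eNorm δ ≤ 2 * eNorm (restrict (Mset S s δ) δ) := by
  have hs0 : (0 : ℝ) < s := by exact_mod_cast hs1
  have hsub : S ⊆ Mset S s δ := Finset.subset_union_left
  have hL0 : 0 ≤ ∑ j ∈ Sᶜ, |δ j| := Finset.sum_nonneg fun _ _ => abs_nonneg _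
  have htail : eNorm (restrict (Mset S s δ)ᶜ δ) ≤ l1 (restrict Sᶜ δ) / Real.sqrt s := by
    rw [eNorm_restrict, l1_restrict]
    apply Real.sqrt_le_iff.mpr
    refine ⟨by positivity, ?_⟩
    rw [div_pow, Real.sq_sqrt hs0.le, le_div_iff₀ hs0]
    calc (∑ i ∈ (Mset S s δ)ᶜ, δ i ^ 2) * s
        = ∑ i ∈ (Mset S s δ)ᶜ, (s * |δ i|) * |δ i| := by
          rw [Finset.sum_mul]
          refine Finset.sum_congr rfl fun i _ => ?_
          rw [← sq_abs]
          ring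
      _ ≤ ∑ i ∈ (Mset S s δ)ᶜ, (∑ j ∈ Sᶜ, |δ j|) * |δ i| :=
          Finset.sum_le_sum fun i hi => mul_le_mul_of_nonneg_right
            (mul_abs_le_of_notMem_Mset S s δ (Finset.mem_compl.mp hi)) (abs_nonneg _)
      _ = (∑ j ∈ Sᶜ, |δ j|) * ∑ i ∈ (Mset S s δ)ᶜ, |δ i| := by rw [Finset.mul_sum]
      _ ≤ (∑ j ∈ Sᶜ, |δ j|) * ∑ i ∈ Sᶜ, |δ i| :=
          mul_le_mul_of_nonneg_left (Finset.sum_le_sum_of_subset_of_nonneg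
            (Finset.compl_subset_compl.mpr hsub) fun _ _ _ => abs_nonneg _) hL0
      _ = (∑ j ∈ Sᶜ, |δ j|) ^ 2 := by ring
  have hhead : l1 (restrict Sᶜ δ) / Real.sqrt s ≤ eNorm (restrict (Mset S s δ) δ) := by
    rw [l1_restrict, l1_restrict] at hcone
    rw [eNorm_restrict, l1_restrict]
    apply Real.le_sqrt_of_sq_le
    rw [div_pow, Real.sq_sqrt hs0.le, div_le_iff₀ hs0]
    calc (∑ j ∈ Sᶜ, |δ j|) ^ 2 ≤ (∑ j ∈ S, |δ j|) ^ 2 := by gcongr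
      _ ≤ S.card * ∑ j ∈ S, |δ j| ^ 2 := sq_sum_le_card_mul_sum_sq
      _ = S.card * ∑ j ∈ S, δ j ^ 2 := by simp only [sq_abs]
      _ ≤ s * ∑ j ∈ Mset S s δ, δ j ^ 2 :=
          mul_le_mul (by exact_mod_cast hS)
            (Finset.sum_le_sum_of_subset_of_nonneg hsub fun _ _ _ => sq_nonneg _)
            (Finset.sum_nonneg fun _ _ => sq_nonneg _) hs0.le
      _ = (∑ j ∈ Mset S s δ, δ j ^ 2) * s := mul_comm _ _
  refine ⟨htail, hhead, ?_⟩
  have hle := htail.trans hhead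
  rw [eNorm_restrict, eNorm_restrict] at hle
  have hM0 : 0 ≤ ∑ j ∈ Mset S s δ, δ j ^ 2 := Finset.sum_nonneg fun _ _ => sq_nonneg _
  have hle' := (Real.sqrt_le_sqrt_iff hM0).mp hle
  rw [eNorm_restrict, eNorm]
  apply Real.sqrt_le_iff.mpr
  refine ⟨by positivity, ?_⟩
  rw [mul_pow, Real.sq_sqrt hM0, ← Finset.sum_add_sum_compl (Mset S s δ)]
  linarith
end

section
/- Let p and s be integers with 1 ≤ s ≤ p/32, and suppose in addition that (p/(2s) + 1)^{s/8} ≥ 2 + (p²/(2s²)) (p + 2) log 2. Then there exist M ≥ ⌊(1 + p/(2s))^{s/8}⌋ binary vectors w₁, …, w_M ∈ {0,1}^p, each having exactly s nonzero coordinates, such that d_H(w_i, w_j) ≥ s/2 for all i ≠ j, and moreover for every subset A ⊆ {1,…,p}: (1/M) Σ_{j=1}^M ‖(w_j)_A‖₀ ≤ 2 |A| s / p. -/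
open BigOperators

/-!
Put `q = ⌊p / s⌋ ≥ 32` and view `s * q` of the `p` coordinates as `s` blocks of size `q`. A word
`x : Fin s → ZMod q` gives the binary vector that selects the position `x b` in each block `b`; it
has weight `s`, and passing to binary vectors does not decrease Hamming distances.

A code `C` of such words that is invariant under the diagonal translations `x ↦ x + (c, …, c)` uses
each selectable coordinate exactly `|C| / q` times, so every coordinate has frequency at most
`1 / q ≤ 2 s / p`, and the bound for an arbitrary set `A` follows by summing over its elements.
Distinct diagonal translates of a word differ in all `s` places, so the Gilbert–Varshamov argument
still works among invariant codes: a largest invariant code with minimum distance at least `s / 2`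
covers the whole space by balls of radius less than `s / 2` (`exists_code`). Such a ball has at most
`2 ^ s * q ^ (s / 2)` points (`card_ball_le`), whence `|C| ^ 8 ≥ q ^ s`, which is more than
the required size, since `1 + p / (2 s) ≤ q`.
-/

/-- Union bound over the possible supports, each of which has at most `s / 2` elements. -/
lemma card_ball_le (s q : ℕ) [NeZero q] (y : Fin s → ZMod q) :
    (Finset.univ.filter (fun x : Fin s → ZMod q => 2 * hammingDist x y < s)).card
      ≤ 2 ^ s * q ^ (s / 2) := by
  classical
  let B : Finset (Fin s) → Finset (Fin s → ZMod q) := fun T =>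
    Fintype.piFinset (fun b => if b ∈ T then Finset.univ else {y b})
  have hB : ∀ T, (B T).card = q ^ T.card := by
    intro T
    simp only [B, Fintype.card_piFinset]
    rw [← Finset.prod_const, ← Finset.prod_subset (Finset.subset_univ T)]
    · apply Finset.prod_congr rfl
      intro b hb
      simp [hb, ZMod.card]
    · intro b _ hb
      simp [hb]
  have hsub : Finset.univ.filter (fun x : Fin s → ZMod q => 2 * hammingDist x y < s) ⊆
      (Finset.univ.filter (fun T : Finset (Fin s) => T.card ≤ s / 2)).biUnion B := by
    intro x hx
    simp only [Finset.mem_filter, Finset.mem_univ, true_and] at hx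
    simp only [Finset.mem_biUnion, Finset.mem_filter, Finset.mem_univ, true_and]
    refine ⟨Finset.univ.filter (fun b => x b ≠ y b), ?_, ?_⟩
    · unfold hammingDist at hx
      omega
    · simp only [B, Fintype.mem_piFinset]
      intro b
      by_cases h : x b = y b <;> simp [h]
  refine (Finset.card_le_card hsub).trans ?_
  refine (Finset.card_biUnion_le_card_mul _ _ (q ^ (s / 2)) ?_).trans ?_
  · intro T hT
    simp only [Finset.mem_filter, Finset.mem_univ, true_and] at hT
    rw [hB]
    exact Nat.pow_le_pow_right (NeZero.pos q) hT
  · refine Nat.mul_le_mul_right _ ((Finset.card_filter_le _ _).trans ?_)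
    simp

/-- The Gilbert–Varshamov bound for codes invariant under diagonal translations. -/
lemma exists_code (s q : ℕ) [NeZero q] (hs : 1 ≤ s) :
    ∃ C : Finset (Fin s → ZMod q),
      (∀ x ∈ C, ∀ c : ZMod q, (fun b => x b + c) ∈ C) ∧
      (∀ x ∈ C, ∀ y ∈ C, x ≠ y → s ≤ 2 * hammingDist x y) ∧
      q ^ s ≤ C.card * (2 ^ s * q ^ (s / 2)) := by
  classical
  let P : Finset (Fin s → ZMod q) → Prop := fun C =>
    (∀ x ∈ C, ∀ c : ZMod q, (fun b => x b + c) ∈ C) ∧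
      (∀ x ∈ C, ∀ y ∈ C, x ≠ y → s ≤ 2 * hammingDist x y)
  obtain ⟨C, hC, hmax⟩ := Finset.exists_max_image (Finset.univ.filter P) Finset.card
    ⟨∅, by simp [P]⟩
  simp only [Finset.mem_filter, Finset.mem_univ, true_and] at hC hmax
  obtain ⟨hinv, hdist⟩ := hC
  refine ⟨C, hinv, hdist, ?_⟩
  have hcover : (Finset.univ : Finset (Fin s → ZMod q)) ⊆ C.biUnion (fun y =>
      Finset.univ.filter (fun x : Fin s → ZMod q => 2 * hammingDist x y < s)) := by
    intro x _
    by_contra hx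
    simp only [Finset.mem_biUnion, Finset.mem_filter, Finset.mem_univ, true_and, not_exists,
      not_and, not_lt] at hx
    let O : Finset (Fin s → ZMod q) := Finset.univ.image (fun c : ZMod q => fun b => x b + c)
    have hO : ∀ y ∈ C, ∀ c : ZMod q, s ≤ 2 * hammingDist (fun b => x b + c) y := by
      intro y hy c
      have h := hx _ (hinv y hy (-c))
      have h2 : hammingDist (fun b => x b + c) y = hammingDist x (fun b => y b + -c) := by
        unfold hammingDist
        congr 1
        ext b
        simp only [Finset.mem_filter, Finset.mem_univ, true_and, ne_eq, not_iff_not]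
        rw [← sub_eq_add_neg, eq_sub_iff_add_eq]
      rw [h2]
      exact h
    have hP : P (C ∪ O) := by
      constructor
      · intro z hz c
        rcases Finset.mem_union.1 hz with hz | hz
        · exact Finset.mem_union_left _ (hinv z hz c)
        · apply Finset.mem_union_right
          obtain ⟨d, -, rfl⟩ := Finset.mem_image.1 hz
          exact Finset.mem_image.2 ⟨d + c, Finset.mem_univ _, by funext b; ring⟩
      · intro z hz y hy hne
        rcases Finset.mem_union.1 hz with hz | hz <;> rcases Finset.mem_union.1 hy with hy | hy
        · exact hdist z hz y hy hne
        · obtain ⟨d, -, rfl⟩ := Finset.mem_image.1 hy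
          rw [hammingDist_comm]
          exact hO z hz d
        · obtain ⟨d, -, rfl⟩ := Finset.mem_image.1 hz
          exact hO y hy d
        · obtain ⟨d, -, rfl⟩ := Finset.mem_image.1 hz
          obtain ⟨d', -, rfl⟩ := Finset.mem_image.1 hy
          have hdd : d ≠ d' := fun h => hne (by rw [h])
          simp [hammingDist, hdd]
          omega
    have hle := hmax _ hP
    have hEq : C = C ∪ O := Finset.eq_of_subset_of_card_le Finset.subset_union_left hle
    have hxC : x ∈ C := by
      rw [hEq]
      exact Finset.mem_union_right _ (Finset.mem_image.2 ⟨0, Finset.mem_univ _, by simp⟩)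
    have h0 := hx x hxC
    rw [hammingDist_self] at h0
    omega
  have h1 := (Finset.card_le_card hcover).trans
    (Finset.card_biUnion_le_card_mul _ _ _ (fun y _ => card_ball_le s q y))
  simpa [ZMod.card] using h1

theorem stmt8 (p s : ℕ) (hs : 1 ≤ s) (hsp : 32 * s ≤ p)
    (hbig : 2 + ((p : ℝ) ^ 2 / (2 * (s : ℝ) ^ 2)) * ((p : ℝ) + 2) * Real.log 2
      ≤ ((p : ℝ) / (2 * s) + 1) ^ ((s : ℝ) / 8)) :
    ∃ (M : ℕ) (w : Fin M → Fin p → Bool),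
      ⌊(1 + (p : ℝ) / (2 * s)) ^ ((s : ℝ) / 8)⌋₊ ≤ M ∧
      (∀ j, (Finset.univ.filter (fun i => w j i = true)).card = s) ∧
      (∀ i j, i ≠ j → (s : ℝ) / 2 ≤ (hammingDist (w i) (w j) : ℝ)) ∧
      (∀ A : Finset (Fin p),
        (1 / (M : ℝ)) * ∑ j : Fin M, ((A.filter (fun i => w j i = true)).card : ℝ)
          ≤ 2 * (A.card : ℝ) * s / p) := by
  classical
  obtain ⟨q, hq⟩ : ∃ q, q = p / s := ⟨_, rfl⟩
  have hq32 : 32 ≤ q := hq ▸ (Nat.le_div_iff_mul_le hs).2 hsp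
  have hsq : s * q ≤ p := hq ▸ Nat.mul_div_le p s
  have hpq : p < s * (q + 1) := hq ▸ Nat.lt_mul_div_succ p hs
  have : NeZero q := ⟨by omega⟩
  obtain ⟨C, hinv, hdist, hcard⟩ := exists_code s q hs
  obtain ⟨e⟩ : Nonempty (Fin s × ZMod q ↪ Fin p) :=
    Function.Embedding.nonempty_of_card_le (by simpa [ZMod.card] using hsq)
  let W : (Fin s → ZMod q) → Fin p → Bool := fun x i => decide (∃ b, e (b, x b) = i)
  have hW : ∀ x i, W x i = true ↔ ∃ b, e (b, x b) = i := fun x i => by simp [W]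
  let f : Fin C.card ≃ C := C.equivFin.symm
  have hsR : (1 : ℝ) ≤ s := by exact_mod_cast hs
  have hqR : (32 : ℝ) ≤ q := by exact_mod_cast hq32
  have hpR : (p : ℝ) < s * (q + 1) := by exact_mod_cast hpq
  have hp0 : (0 : ℝ) < p := by exact_mod_cast (by omega : 0 < p)
  have hpow : q ^ s ≤ C.card ^ 8 := by
    have h1 : (q ^ s) ^ 8 ≤ C.card ^ 8 * (q ^ (2 * s) * q ^ (4 * s)) := by
      refine (Nat.pow_le_pow_left hcard 8).trans ?_
      rw [mul_pow, mul_pow]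
      refine Nat.mul_le_mul_left _ (Nat.mul_le_mul ?_ ?_)
      · rw [← pow_mul, mul_comm s 8, pow_mul, pow_mul]
        exact Nat.pow_le_pow_left (by nlinarith) s
      · rw [← pow_mul]
        exact Nat.pow_le_pow_right (by omega) (by omega)
    have h2 : (q ^ s) ^ 8 = q ^ (2 * s) * (q ^ (2 * s) * q ^ (4 * s)) := by ring
    rw [h2] at h1
    exact (Nat.pow_le_pow_right (by omega) (by omega)).trans
      (Nat.le_of_mul_le_mul_right h1 (by positivity))
  have hMpos : 0 < C.card := by
    rcases Nat.eq_zero_or_pos C.card with h | h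
    · rw [h] at hpow
      have : 0 < q ^ s := by positivity
      omega
    · exact h
  have hMR : (0 : ℝ) < C.card := by exact_mod_cast hMpos
  refine ⟨C.card, fun j => W (f j), ?_, ?_, ?_, ?_⟩
  · apply Nat.floor_le_of_le
    have hbase : 1 + (p : ℝ) / (2 * s) ≤ q := by
      have : (p : ℝ) / (2 * s) ≤ (q + 1) / 2 := by
        rw [div_le_div_iff₀ (by positivity) (by positivity)]
        nlinarith
      linarith
    refine (Real.rpow_le_rpow (by positivity) hbase (by positivity)).trans ?_
    refine le_of_pow_le_pow_left₀ (n := 8) (by norm_num) hMR.le ?_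
    rw [← Real.rpow_natCast, ← Real.rpow_mul (by positivity)]
    have : (s : ℝ) / 8 * ((8 : ℕ) : ℝ) = s := by push_cast; ring
    rw [this, Real.rpow_natCast]
    exact_mod_cast hpow
  · intro j
    have : Finset.univ.filter (fun i => W (f j) i = true) =
        Finset.univ.image (fun b => e (b, (f j : Fin s → ZMod q) b)) := by
      ext i
      simp [hW]
    rw [this, Finset.card_image_of_injective, Finset.card_univ, Fintype.card_fin]
    intro b b' h
    exact (Prod.ext_iff.1 (e.injective h)).1
  · intro i j hij
    have hne : (f i : Fin s → ZMod q) ≠ f j := fun h => hij (f.injective (Subtype.ext h))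
    have h1 := hdist _ (f i).2 _ (f j).2 hne
    -- where the words differ, the position selected by the first is not selected by the second
    have h2 : hammingDist (f i : Fin s → ZMod q) (f j) ≤ hammingDist (W (f i)) (W (f j)) := by
      unfold hammingDist
      apply Finset.card_le_card_of_injOn (fun b => e (b, (f i : Fin s → ZMod q) b))
      · intro b hb
        simp only [Finset.coe_filter, Finset.mem_univ, true_and, Set.mem_ofPred_eq] at hb ⊢
        intro heq
        have ht : W (f i) (e (b, (f i : Fin s → ZMod q) b)) = true := (hW _ _).2 ⟨b, rfl⟩
        rw [heq, hW] at ht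
        obtain ⟨b', hb'⟩ := ht
        obtain ⟨h3, h4⟩ := Prod.ext_iff.1 (e.injective hb')
        simp only at h3 h4
        subst h3
        exact hb h4.symm
      · intro b _ b' _ h
        exact (Prod.ext_iff.1 (e.injective h)).1
    have h3 : (s : ℝ) ≤ 2 * (hammingDist (W (f i)) (W (f j)) : ℝ) := by
      exact_mod_cast h1.trans (Nat.mul_le_mul_left 2 h2)
    linarith
  · intro A
    have hdeg : ∀ i : Fin p,
        q * (Finset.univ.filter (fun j => W (f j) i = true)).card ≤ C.card := by
      intro i
      -- words selecting `i` agree in the block of `i`, so their translates are all distinct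
      have h := Finset.card_le_card_of_injOn
        (s := (Finset.univ : Finset (ZMod q)) ×ˢ
          Finset.univ.filter (fun j => W (f j) i = true)) (t := C)
        (fun z b => (f z.2 : Fin s → ZMod q) b + z.1)
        (fun z _ => hinv _ (f z.2).2 z.1) ?_
      · simpa [Finset.card_product, ZMod.card] using h
      · rintro ⟨c, j⟩ hz ⟨c', j'⟩ hz' h
        simp only [Finset.coe_product, Set.mem_prod, Finset.coe_filter, Finset.mem_univ, true_and,
          Set.mem_ofPred_eq, Finset.coe_univ, Set.mem_univ, hW] at hz hz'
        obtain ⟨b, hb⟩ := hz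
        obtain ⟨b', hb'⟩ := hz'
        obtain ⟨h3, h4⟩ := Prod.ext_iff.1 (e.injective (hb.trans hb'.symm))
        simp only at h3 h4 h
        subst h3
        have h5 := congrFun h b
        simp only [h4, add_right_inj] at h5
        subst h5
        have h6 : (f j : Fin s → ZMod q) = f j' := by
          funext a
          exact add_right_cancel (congrFun h a)
        rw [f.injective (Subtype.ext h6)]
    have hswap : ∑ j : Fin C.card, ((A.filter (fun i => W (f j) i = true)).card : ℝ) =
        ∑ i ∈ A, ((Finset.univ.filter (fun j => W (f j) i = true)).card : ℝ) := by
      simp only [Finset.card_filter, Nat.cast_sum]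
      exact Finset.sum_comm
    have hsum : ∑ i ∈ A, ((Finset.univ.filter (fun j => W (f j) i = true)).card : ℝ) ≤
        A.card * (C.card / q) := by
      rw [← nsmul_eq_mul]
      apply Finset.sum_le_card_nsmul
      intro i _
      rw [le_div_iff₀ (by positivity), mul_comm]
      exact_mod_cast hdeg i
    rw [hswap]
    calc (1 / (C.card : ℝ)) *
          ∑ i ∈ A, ((Finset.univ.filter (fun j => W (f j) i = true)).card : ℝ)
        ≤ (1 / (C.card : ℝ)) * (A.card * (C.card / q)) := by gcongr
      _ = A.card * (1 / q) := by field_simp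
      _ ≤ A.card * (2 * s / p) := by
          refine mul_le_mul_of_nonneg_left ?_ (by positivity)
          rw [div_le_div_iff₀ (by positivity) hp0]
          nlinarith
      _ = 2 * (A.card : ℝ) * s / p := by ring
end
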